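/- Let Q be a plurisubharmonic real polynomial on C² that is not harmonic (as a function on C² ≅ R⁴), and which is homogeneous of degree 2p in z₁ and of degree 2q in z₂, i.e., Q(t z₁, z₂) = t^{2p} Q(z₁, z₂) and Q(z₁, t z₂) = t^{2q} Q(z₁, z₂) for all real t > 0 (p, q positive integers). Then there exist positive integers d, D and a homogeneous, subharmonic, non-harmonic real polynomial U on C such that Q(z₁, z₂) = U(z₁^d z₂^D) for all (z₁, z₂) ∈ C². -/

import Mathlib

/-!
Expand `Q` into monomials `z₁^m₀ z̄₁^m₁ z₂^m₂ z̄₂^m₃`; the expansion is unique (`poly_eq_zero`).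
Bihomogeneity forces `m₀ + m₁ = 2p` and `m₂ + m₃ = 2q` (`support_bidegree`).

The Levi form of `Q` in the direction `(q z₁, -p z₂)` multiplies each monomial by
`(q m₀ - p m₂)(q m₁ - p m₃) = -(q m₀ - p m₂)²`. It is the second derivative, up to a positive
factor, of `Q` along the orbits of the circle action `(z₁, z₂) ↦ (e^{iqs} z₁, e^{-ips} z₂)`. So `Q`
is convex and periodic along these orbits, hence constant. In `support_line` this is done
algebraically: the average of the Levi form over the `N`-th roots of unity in the circle is zero
for `N` large, and each term is nonnegative, so the Levi form in this direction vanishes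
identically. Therefore every monomial that occurs satisfies `q m₀ = p m₂`.

With `g = gcd p q`, `p = d g`, `q = D g`, such a monomial is `w^k w̄^(2g-k)` with
`w = z₁^d z₂^D`, which gives `Q = U(z₁^d z₂^D)`. The chain rule
`|z₁|² ∂₁∂̄₁Q = d² |w|² ∂∂̄U(w)`, and its analogue in `z₂`, transfer nonnegativity of the
Laplacian to `U` for `w ≠ 0`, then for `w = 0` by continuity, and show that `U` harmonic would
force `Q` harmonic.
-/

open Complex ComplexConjugate Metric Set

noncomputable section

/-- Wirtinger derivative `∂f` in the complex direction `e`. -/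
def wd (f : ℂ × ℂ → ℂ) (e : ℂ × ℂ) (z : ℂ × ℂ) : ℂ :=
  (1 / 2) * (fderiv ℝ f z e - Complex.I * fderiv ℝ f z (Complex.I • e))

/-- Conjugate Wirtinger derivative `∂̄f` in the complex direction `e`. -/
def wdbar (f : ℂ × ℂ → ℂ) (e : ℂ × ℂ) (z : ℂ × ℂ) : ℂ :=
  (1 / 2) * (fderiv ℝ f z e + Complex.I * fderiv ℝ f z (Complex.I • e))

/-- Mixed second derivative `∂²P/∂z_(ej)∂z̄_(ek)` of a real-valued function. -/
def mixedDeriv (P : ℂ × ℂ → ℝ) (ej ek : ℂ × ℂ) (z : ℂ × ℂ) : ℂ :=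
  wd (wdbar (fun w => (P w : ℂ)) ek) ej z

/-- The Levi form of `P` at `z` in the direction `v`. -/
def leviForm (P : ℂ × ℂ → ℝ) (z v : ℂ × ℂ) : ℂ :=
  mixedDeriv P (1, 0) (1, 0) z * v.1 * conj v.1 +
  mixedDeriv P (1, 0) (0, 1) z * v.1 * conj v.2 +
  mixedDeriv P (0, 1) (1, 0) z * v.2 * conj v.1 +
  mixedDeriv P (0, 1) (0, 1) z * v.2 * conj v.2

/-- `P` is plurisubharmonic on all of `ℂ²`. -/
def IsPsh (P : ℂ × ℂ → ℝ) : Prop := ∀ z v, 0 ≤ (leviForm P z v).re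

/-- `P` is strictly plurisubharmonic at `z`. -/
def IsStrictPshAt (P : ℂ × ℂ → ℝ) (z : ℂ × ℂ) : Prop :=
  ∀ v, v ≠ 0 → 0 < (leviForm P z v).re

/-- The Levi-degeneracy set of `P`. -/
def leviDegen (P : ℂ × ℂ → ℝ) : Set (ℂ × ℂ) :=
  {z | ¬ IsStrictPshAt P z}

/-- One-variable Wirtinger derivative. -/
def wd1 (f : ℂ → ℂ) (z : ℂ) : ℂ :=
  (1 / 2) * (fderiv ℝ f z 1 - Complex.I * fderiv ℝ f z Complex.I)

def wdbar1 (f : ℂ → ℂ) (z : ℂ) : ℂ :=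
  (1 / 2) * (fderiv ℝ f z 1 + Complex.I * fderiv ℝ f z Complex.I)

/-- The Laplacian of a function on `ℂ`, as `4 ∂∂̄`. -/
def lap (u : ℂ → ℝ) (z : ℂ) : ℂ := 4 * wd1 (wdbar1 fun w => (u w : ℂ)) z

def IsHarmonic (u : ℂ → ℝ) : Prop := ∀ z, lap u z = 0

def Subharmonic (u : ℂ → ℝ) : Prop := ∀ z, 0 ≤ (lap u z).re

/-- The Laplacian of a function on `ℂ² ≅ ℝ⁴`. -/
def lap2 (P : ℂ × ℂ → ℝ) (z : ℂ × ℂ) : ℂ :=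
  4 * (mixedDeriv P (1, 0) (1, 0) z + mixedDeriv P (0, 1) (0, 1) z)

/-- `P` is a real-valued polynomial in `z₁, z̄₁, z₂, z̄₂`. -/
def IsRealPoly2 (P : ℂ × ℂ → ℝ) : Prop :=
  ∃ Q : MvPolynomial (Fin 4) ℂ,
    ∀ z : ℂ × ℂ, (P z : ℂ) = MvPolynomial.eval ![z.1, conj z.1, z.2, conj z.2] Q

/-- `u` is a real-valued polynomial in `z, z̄`. -/
def IsRealPoly1 (u : ℂ → ℝ) : Prop :=
  ∃ Q : MvPolynomial (Fin 2) ℂ,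
    ∀ z : ℂ, (u z : ℂ) = MvPolynomial.eval ![z, conj z] Q

/-- `F` is a holomorphic polynomial map on `ℂ²`. -/
def IsPolyMap2 (F : ℂ × ℂ → ℂ) : Prop :=
  ∃ Q : MvPolynomial (Fin 2) ℂ, ∀ z : ℂ × ℂ, F z = MvPolynomial.eval ![z.1, z.2] Q

/-- `P` has no pluriharmonic terms: in its (unique) monomial expansion in
`z₁, z̄₁, z₂, z̄₂` every monomial involves both a conjugated and an
unconjugated variable. Indexing: `0 ↦ z₁`, `1 ↦ z̄₁`, `2 ↦ z₂`, `3 ↦ z̄₂`. -/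
def NoPluriharmonicTerms (P : ℂ × ℂ → ℝ) : Prop :=
  ∃ Q : MvPolynomial (Fin 4) ℂ,
    (∀ z : ℂ × ℂ, (P z : ℂ) = MvPolynomial.eval ![z.1, conj z.1, z.2, conj z.2] Q) ∧
    ∀ m ∈ Q.support, (m 1 ≠ 0 ∨ m 3 ≠ 0) ∧ (m 0 ≠ 0 ∨ m 2 ≠ 0)

/-- `P` is pluriharmonic: the real part of an entire function. -/
def IsPluriharmonic (P : ℂ × ℂ → ℝ) : Prop :=
  ∃ f : ℂ × ℂ → ℂ, Differentiable ℂ f ∧ ∀ z, P z = (f z).re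

/-- `P` is homogeneous of degree `d`. -/
def HomogeneousDeg (P : ℂ × ℂ → ℝ) (d : ℕ) : Prop :=
  ∀ t : ℝ, 0 < t → ∀ z : ℂ × ℂ, P (t • z) = t ^ d * P z

/-- The directions `ζ` such that `P` is harmonic along the line `{(ζw, w)}`. -/
def harmDirs (P : ℂ × ℂ → ℝ) : Set ℂ := {ζ | IsHarmonic fun w => P (ζ * w, w)}

/-- The union of all complex lines through `0` along which `P` is harmonic. -/
def linesUnion (P : ℂ × ℂ → ℝ) : Set (ℂ × ℂ) :=
  {z | (∃ ζ ∈ harmDirs P, z.1 = ζ * z.2) ∨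
       (IsHarmonic (fun w => P (w, 0)) ∧ z.2 = 0)}

/-- `P` is harmonic along the smooth part of the set `V`: for every injective
holomorphic parametrization by the unit disc of a piece of `V`, the pullback
of `P` is harmonic. -/
def HarmonicAlong (P : ℂ × ℂ → ℝ) (V : Set (ℂ × ℂ)) : Prop :=
  ∀ φ : ℂ → ℂ × ℂ, DifferentiableOn ℂ φ (Metric.ball 0 1) →
    Set.InjOn φ (Metric.ball 0 1) → φ '' Metric.ball 0 1 ⊆ V →
    ∀ ζ ∈ Metric.ball (0 : ℂ) 1, lap (fun w => P (φ w)) ζ = 0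

/-- `S` contains no complex-analytic subvariety of positive dimension. -/
def NoPosDimVariety (S : Set (ℂ × ℂ)) : Prop :=
  ∀ φ : ℂ → ℂ × ℂ, DifferentiableOn ℂ φ (Metric.ball 0 1) →
    φ '' Metric.ball 0 1 ⊆ S →
    ∀ x ∈ Metric.ball (0 : ℂ) 1, ∀ y ∈ Metric.ball (0 : ℂ) 1, φ x = φ y

/-- Property (A) for a homogeneous polynomial `P`. -/
def PropertyA (P : ℂ × ℂ → ℝ) : Prop :=
  NoPosDimVariety (leviDegen P \ linesUnion P) ∧
  ∃ W : Set (ℂ × ℂ), IsClosed W ∧ (∀ z ∈ W, ∀ t : ℝ, 0 < t → t • z ∈ W) ∧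
    leviDegen P \ linesUnion P ⊆ W ∧ interior W ∩ linesUnion P = ∅

/-- Property (B): there is an entire function all of whose level curves have
smooth part along which `P` is harmonic. -/
def PropertyB (P : ℂ × ℂ → ℝ) : Prop :=
  ∃ H : ℂ × ℂ → ℂ, Differentiable ℂ H ∧ ∀ c : ℂ, HarmonicAlong P (H ⁻¹' {c})

/-- The anisotropic dilation `(t^{1/m₁}z₁, t^{1/m₂}z₂)`. -/
def wdil (m₁ m₂ : ℕ) (t : ℝ) (z : ℂ × ℂ) : ℂ × ℂ :=
  (((t ^ ((m₁ : ℝ)⁻¹) : ℝ) : ℂ) * z.1, ((t ^ ((m₂ : ℝ)⁻¹) : ℝ) : ℂ) * z.2)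

/-- `(m₁,m₂)`-homogeneity with weight `r`. -/
def WHomog (m₁ m₂ : ℕ) (P : ℂ × ℂ → ℝ) (r : ℝ) : Prop :=
  ∀ t : ℝ, 0 < t → ∀ z : ℂ × ℂ, P (wdil m₁ m₂ t z) = t ^ r * P z

/-- The weighted curve `{z₁^a = ζ z₂^b}`. -/
def wCurve (a b : ℕ) (ζ : ℂ) : Set (ℂ × ℂ) := {z | z.1 ^ a = ζ * z.2 ^ b}

/-- The parameters `ζ ∈ ℂ` of weighted curves along which `P` is harmonic. -/
def wHarmDirs (P : ℂ × ℂ → ℝ) (a b : ℕ) : Set ℂ :=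
  {ζ | HarmonicAlong P (wCurve a b ζ)}

/-- The union of all curves in `E(P)` (including the one for `ζ = ∞`). -/
def wEUnion (P : ℂ × ℂ → ℝ) (a b : ℕ) : Set (ℂ × ℂ) :=
  {z | (∃ ζ ∈ wHarmDirs P a b, z.1 ^ a = ζ * z.2 ^ b) ∨
       (HarmonicAlong P {w : ℂ × ℂ | w.2 = 0} ∧ z.2 = 0)}

/-- Property (A) in the `(m₁,m₂)`-homogeneous setting (with wedges). -/
def PropertyAW (m₁ m₂ : ℕ) (P : ℂ × ℂ → ℝ) : Prop :=
  NoPosDimVariety (leviDegen P \ wEUnion P (m₁ / Nat.gcd m₁ m₂) (m₂ / Nat.gcd m₁ m₂)) ∧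
  ∃ W : Set (ℂ × ℂ), IsClosed W ∧ (∀ z ∈ W, ∀ t : ℝ, 0 < t → wdil m₁ m₂ t z ∈ W) ∧
    leviDegen P \ wEUnion P (m₁ / Nat.gcd m₁ m₂) (m₂ / Nat.gcd m₁ m₂) ⊆ W ∧
    interior W ∩ wEUnion P (m₁ / Nat.gcd m₁ m₂) (m₂ / Nat.gcd m₁ m₂) = ∅

/-! ### Wirtinger derivatives of polynomials -/

/-- Chain rule for a polynomial in several real-differentiable complex-valued functions. -/
lemma hasFDerivAt_eval {E σ : Type*} [NormedAddCommGroup E] [NormedSpace ℝ E] [Fintype σ]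
    (x : σ → E → ℂ) (L : σ → E →L[ℝ] ℂ) (z : E) (hx : ∀ i, HasFDerivAt (x i) (L i) z)
    (P : MvPolynomial σ ℂ) :
    HasFDerivAt (fun w => MvPolynomial.eval (fun i => x i w) P)
      (∑ i, MvPolynomial.eval (fun i => x i z) (MvPolynomial.pderiv i P) • L i) z := by
  classical
  induction P using MvPolynomial.induction_on with
  | C a =>
    simp only [MvPolynomial.eval_C]
    refine (hasFDerivAt_const (𝕜 := ℝ) a z).congr_fderiv ?_
    ext v
    simp
  | add P R hP hR =>
    simp only [map_add]
    refine (hP.add hR).congr_fderiv ?_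
    rw [← Finset.sum_add_distrib]
    exact Finset.sum_congr rfl fun i _ => (add_smul _ _ _).symm
  | mul_X P i hP =>
    have := hP.mul (hx i)
    simp only [map_mul, MvPolynomial.eval_X]
    refine this.congr_fderiv ?_
    ext v
    simp only [Derivation.leibniz, smul_eq_mul, map_add, map_mul, MvPolynomial.eval_X,
      add_apply, sum_apply, add_mul,
      smul_apply, Finset.sum_add_distrib, Finset.mul_sum, mul_assoc]
    congr 1
    rw [Finset.sum_eq_single i]
    · simp
    · intro j _ hj
      simp [MvPolynomial.pderiv_X_of_ne hj.symm]
    · simp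

/-- The point `(z₁, z̄₁, z₂, z̄₂)`. -/
abbrev pt (z : ℂ × ℂ) : Fin 4 → ℂ := ![z.1, conj z.1, z.2, conj z.2]

lemma hasFDerivAt_pt (P : MvPolynomial (Fin 4) ℂ) (z : ℂ × ℂ) :
    HasFDerivAt (fun w => MvPolynomial.eval (pt w) P)
      (∑ i, MvPolynomial.eval (pt z) (MvPolynomial.pderiv i P) •
        (![ContinuousLinearMap.fst ℝ ℂ ℂ,
          (conjCLE : ℂ →L[ℝ] ℂ).comp (ContinuousLinearMap.fst ℝ ℂ ℂ),
          ContinuousLinearMap.snd ℝ ℂ ℂ,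
          (conjCLE : ℂ →L[ℝ] ℂ).comp (ContinuousLinearMap.snd ℝ ℂ ℂ)] i)) z := by
  have := hasFDerivAt_eval (fun i w => pt w i)
    ![ContinuousLinearMap.fst ℝ ℂ ℂ,
          (conjCLE : ℂ →L[ℝ] ℂ).comp (ContinuousLinearMap.fst ℝ ℂ ℂ),
          ContinuousLinearMap.snd ℝ ℂ ℂ,
          (conjCLE : ℂ →L[ℝ] ℂ).comp (ContinuousLinearMap.snd ℝ ℂ ℂ)] z ?_ P
  · exact this
  · intro i
    fin_cases i
    · exact ContinuousLinearMap.hasFDerivAt (ContinuousLinearMap.fst ℝ ℂ ℂ)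
    · exact ContinuousLinearMap.hasFDerivAt
        ((conjCLE : ℂ →L[ℝ] ℂ).comp (ContinuousLinearMap.fst ℝ ℂ ℂ))
    · exact ContinuousLinearMap.hasFDerivAt (ContinuousLinearMap.snd ℝ ℂ ℂ)
    · exact ContinuousLinearMap.hasFDerivAt
        ((conjCLE : ℂ →L[ℝ] ℂ).comp (ContinuousLinearMap.snd ℝ ℂ ℂ))

lemma wirtinger_eval (P : MvPolynomial (Fin 4) ℂ) :
    wd (fun w => MvPolynomial.eval (pt w) P) (1, 0) =
        (fun w => MvPolynomial.eval (pt w) (MvPolynomial.pderiv 0 P)) ∧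
    wdbar (fun w => MvPolynomial.eval (pt w) P) (1, 0) =
        (fun w => MvPolynomial.eval (pt w) (MvPolynomial.pderiv 1 P)) ∧
    wd (fun w => MvPolynomial.eval (pt w) P) (0, 1) =
        (fun w => MvPolynomial.eval (pt w) (MvPolynomial.pderiv 2 P)) ∧
    wdbar (fun w => MvPolynomial.eval (pt w) P) (0, 1) =
        (fun w => MvPolynomial.eval (pt w) (MvPolynomial.pderiv 3 P)) := by
  refine ⟨?_, ?_, ?_, ?_⟩ <;>
  · funext z
    simp only [wd, wdbar, (hasFDerivAt_pt P z).fderiv]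
    simp [Fin.sum_univ_four]
    ring_nf
    simp only [I_sq]
    ring

lemma wirtinger1_eval (P : MvPolynomial (Fin 2) ℂ) :
    wd1 (fun w => MvPolynomial.eval ![w, conj w] P) =
        (fun w => MvPolynomial.eval ![w, conj w] (MvPolynomial.pderiv 0 P)) ∧
    wdbar1 (fun w => MvPolynomial.eval ![w, conj w] P) =
        (fun w => MvPolynomial.eval ![w, conj w] (MvPolynomial.pderiv 1 P)) := by
  have key : ∀ z : ℂ, HasFDerivAt (fun w : ℂ => MvPolynomial.eval ![w, conj w] P)
      (∑ i, MvPolynomial.eval ![z, conj z] (MvPolynomial.pderiv i P) •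
        (![ContinuousLinearMap.id ℝ ℂ, (conjCLE : ℂ →L[ℝ] ℂ)] i)) z := by
    intro z
    refine hasFDerivAt_eval (fun i (w : ℂ) => (![w, conj w] : Fin 2 → ℂ) i) _ z ?_ P
    intro i
    fin_cases i
    · exact ContinuousLinearMap.hasFDerivAt (ContinuousLinearMap.id ℝ ℂ)
    · exact ContinuousLinearMap.hasFDerivAt (conjCLE : ℂ →L[ℝ] ℂ)
  constructor <;>
  · funext z
    simp only [wd1, wdbar1, (key z).fderiv]
    simp [Fin.sum_univ_two]
    ring_nf
    try simp
    try ring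

/-- A polynomial in `z₁, z̄₁, z₂, z̄₂` that vanishes as a function on `ℂ²` is zero, because the
real and imaginary parts are independent real coordinates. -/
lemma poly_eq_zero (P : MvPolynomial (Fin 4) ℂ)
    (h : ∀ z : ℂ × ℂ, MvPolynomial.eval (pt z) P = 0) : P = 0 := by
  open MvPolynomial in
  set R := bind₁ (![X 0 + C I * X 1, X 0 - C I * X 1, X 2 + C I * X 3, X 2 - C I * X 3] :
    Fin 4 → MvPolynomial (Fin 4) ℂ) P with hR
  have hev : ∀ x : Fin 4 → ℂ, MvPolynomial.eval x R = MvPolynomial.eval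
      (![x 0 + I * x 1, x 0 - I * x 1, x 2 + I * x 3, x 2 - I * x 3]) P := by
    intro x
    rw [hR, ← MvPolynomial.coe_aeval_eq_eval, ← MvPolynomial.coe_aeval_eq_eval]
    simp only [RingHom.coe_coe, MvPolynomial.aeval_bind₁]
    congr 2
    funext i
    fin_cases i <;> simp
  have hR0 : R = 0 := by
    refine MvPolynomial.funext_set (fun _ => Set.range (fun x : ℝ => (x : ℂ)))
      (fun _ => Set.infinite_range_of_injective Complex.ofReal_injective) ?_
    intro x hx
    simp only [Set.mem_pi, Set.mem_univ, Set.mem_range, forall_const] at hx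
    choose y hy using hx
    rw [map_zero, ← h (x 0 + I * x 1, x 2 + I * x 3), hev]
    congr 2
    funext i
    have hc : ∀ i, conj (x i) = x i := fun i => by rw [← hy i, conj_ofReal]
    fin_cases i <;> simp [pt, hc, sub_eq_add_neg]
  refine MvPolynomial.funext fun x => ?_
  -- the inverse change of variables: real part and imaginary part as polynomials in `z, z̄`
  have := hev ![(x 0 + x 1) / 2, (x 0 - x 1) / (2 * I), (x 2 + x 3) / 2, (x 2 - x 3) / (2 * I)]
  rw [hR0, map_zero] at this
  rw [map_zero, this]
  congr 2
  funext i
  have hI : I ≠ 0 := I_ne_zero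
  fin_cases i <;> simp <;> field_simp <;> ring

/-! ### Monomial expansions and weights -/

section Weights

open MvPolynomial

/-- The polynomial obtained from `P` by multiplying the coefficient of each monomial `m` by
`f m`. -/
def wt {σ : Type*} (f : (σ →₀ ℕ) → ℂ) (P : MvPolynomial σ ℂ) : MvPolynomial σ ℂ :=
  ∑ m ∈ P.support, monomial m (f m * coeff m P)

lemma coeff_wt {σ : Type*} (f : (σ →₀ ℕ) → ℂ) (P : MvPolynomial σ ℂ) (m : σ →₀ ℕ) :
    coeff m (wt f P) = f m * coeff m P := by
  classical
  simp only [wt, coeff_sum, coeff_monomial]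
  rw [Finset.sum_ite_eq']
  split_ifs with h
  · rfl
  · rw [notMem_support_iff.1 h, mul_zero]

lemma eval_wt {σ : Type*} [Fintype σ] (f : (σ →₀ ℕ) → ℂ) (P : MvPolynomial σ ℂ) (x : σ → ℂ) :
    eval x (wt f P) = ∑ m ∈ P.support, f m * coeff m P * ∏ i, x i ^ m i := by
  simp [wt, map_sum, eval_monomial, Finsupp.prod_fintype]

lemma X_X_pderiv_monomial {σ : Type*} {i j : σ} (hij : i ≠ j) (m : σ →₀ ℕ) (c : ℂ) :
    X i * X j * pderiv i (pderiv j (monomial m c)) =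
      monomial m ((m i * m j : ℂ) * c) := by
  classical
  have h1 : X i * X j * pderiv i (pderiv j (monomial m c)) =
      X i * pderiv i (X j * pderiv j (monomial m c)) := by
    rw [Derivation.leibniz, pderiv_X_of_ne hij.symm]
    simp [mul_assoc]
  rw [h1, X_mul_pderiv_monomial, map_nsmul, mul_smul_comm, X_mul_pderiv_monomial, smul_smul,
    smul_monomial]
  congr 1
  simp only [nsmul_eq_mul, Nat.cast_mul]
  ring

lemma X_X_pderiv {σ : Type*} {i j : σ} (hij : i ≠ j) (P : MvPolynomial σ ℂ) :
    X i * X j * pderiv i (pderiv j P) = wt (fun m => (m i * m j : ℂ)) P := by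
  conv_lhs => rw [P.as_sum]
  simp only [map_sum, Finset.mul_sum, X_X_pderiv_monomial hij, wt]

lemma eq_zero_of_wt (f : (Fin 4 →₀ ℕ) → ℂ) (P : MvPolynomial (Fin 4) ℂ)
    (h : ∀ z, eval (pt z) (wt f P) = 0) : ∀ m ∈ P.support, f m = 0 := by
  intro m hm
  have := coeff_wt f P m
  rw [poly_eq_zero _ h, coeff_zero] at this
  exact (mul_eq_zero.1 this.symm).resolve_right (mem_support_iff.1 hm)

lemma eval_scale (f : (Fin 4 →₀ ℕ) → ℂ) (P : MvPolynomial (Fin 4) ℂ) (a b : ℂ) (z : ℂ × ℂ) :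
    eval (pt (a * z.1, b * z.2)) (wt f P) = eval (pt z)
      (wt (fun m => f m * (a ^ m 0 * conj a ^ m 1 * b ^ m 2 * conj b ^ m 3)) P) := by
  simp only [eval_wt, Fin.prod_univ_four]
  refine Finset.sum_congr rfl fun m _ => ?_
  simp [pt, mul_pow]
  ring

lemma wt_one {σ : Type*} (P : MvPolynomial σ ℂ) : wt (fun _ => 1) P = P := by
  ext m
  simp [coeff_wt]

lemma wt_sub {σ : Type*} (f g : (σ →₀ ℕ) → ℂ) (P : MvPolynomial σ ℂ) :
    wt (fun m => f m - g m) P = wt f P - wt g P := by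
  ext m
  simp [coeff_wt, sub_mul]

lemma wt_const {σ : Type*} (c : ℂ) (P : MvPolynomial σ ℂ) : wt (fun _ => c) P = C c * P := by
  ext m
  simp [coeff_wt]

/-- Comparing the scalings by `2` suffices to read off the bidegree of each monomial. -/
lemma support_bidegree {p q : ℕ} {Q : ℂ × ℂ → ℝ} {P : MvPolynomial (Fin 4) ℂ}
    (hP : ∀ z, (Q z : ℂ) = eval (pt z) P)
    (hhom1 : ∀ t : ℝ, 0 < t → ∀ z : ℂ × ℂ, Q ((t : ℂ) * z.1, z.2) = t ^ (2 * p) * Q z)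
    (hhom2 : ∀ t : ℝ, 0 < t → ∀ z : ℂ × ℂ, Q (z.1, (t : ℂ) * z.2) = t ^ (2 * q) * Q z) :
    ∀ m ∈ P.support, m 0 + m 1 = 2 * p ∧ m 2 + m 3 = 2 * q := by
  have pow2 : ∀ a b : ℕ, (2 : ℂ) ^ a - 2 ^ b = 0 → a = b := by
    intro a b h
    have h' : (2 : ℂ) ^ a = 2 ^ b := sub_eq_zero.1 h
    exact Nat.pow_right_injective le_rfl (by exact_mod_cast h')
  have h1 := eq_zero_of_wt (fun m => (2 : ℂ) ^ (m 0 + m 1) - 2 ^ (2 * p)) P (by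
    intro z
    have e1 := eval_scale (fun _ => 1) P 2 1 z
    have e2 := congrArg (fun x : ℝ => (x : ℂ)) (hhom1 2 two_pos z)
    simp only [ofReal_mul, ofReal_pow, hP, ofReal_ofNat] at e2
    rw [wt_one, one_mul, e2] at e1
    rw [wt_sub, map_sub, wt_const, map_mul, eval_C, e1, sub_eq_zero]
    congr 2
    funext m
    simp [pow_add, conj_ofNat])
  have h2 := eq_zero_of_wt (fun m => (2 : ℂ) ^ (m 2 + m 3) - 2 ^ (2 * q)) P (by
    intro z
    have e1 := eval_scale (fun _ => 1) P 1 2 z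
    have e2 := congrArg (fun x : ℝ => (x : ℂ)) (hhom2 2 two_pos z)
    simp only [ofReal_mul, ofReal_pow, hP, ofReal_ofNat] at e2
    rw [wt_one, one_mul, e2] at e1
    rw [wt_sub, map_sub, wt_const, map_mul, eval_C, e1, sub_eq_zero]
    congr 2
    funext m
    simp [pow_add, conj_ofNat])
  exact fun m hm => ⟨pow2 _ _ (h1 m hm), pow2 _ _ (h2 m hm)⟩

/-- Exchanging each variable with its conjugate and conjugating the coefficients. -/
def conjPoly (P : MvPolynomial (Fin 4) ℂ) : MvPolynomial (Fin 4) ℂ :=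
  rename (![1, 0, 3, 2] : Fin 4 → Fin 4) (map (starRingEnd ℂ) P)

lemma eval_conjPoly (P : MvPolynomial (Fin 4) ℂ) (z : ℂ × ℂ) :
    eval (pt z) (conjPoly P) = conj (eval (pt z) P) := by
  rw [conjPoly, eval_rename, eval_map, ← coe_eval₂Hom]
  have : (starRingEnd ℂ) (eval (pt z) P) =
      eval₂ (starRingEnd ℂ) (fun i => conj (pt z i)) P := by
    rw [eval, coe_eval₂Hom, eval₂_comp_left]
    rfl
  rw [this, coe_eval₂Hom]
  congr 1
  funext i
  fin_cases i <;> simp [pt]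

lemma coeff_conjPoly (P : MvPolynomial (Fin 4) ℂ) (m : Fin 4 →₀ ℕ) :
    coeff m (conjPoly P) =
      conj (coeff (m.mapDomain (![1, 0, 3, 2] : Fin 4 → Fin 4)) P) := by
  have hinj : Function.Injective (![1, 0, 3, 2] : Fin 4 → Fin 4) := by decide
  have hinv : (![1, 0, 3, 2] : Fin 4 → Fin 4) ∘ ![1, 0, 3, 2] = id := by decide
  have : (m.mapDomain (![1, 0, 3, 2] : Fin 4 → Fin 4)).mapDomain
      (![1, 0, 3, 2] : Fin 4 → Fin 4) = m := by
    rw [← Finsupp.mapDomain_comp, hinv, Finsupp.mapDomain_id]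
  conv_lhs => rw [← this]
  rw [conjPoly, coeff_rename_mapDomain _ hinj, coeff_map]

/-- If `P` is real-valued at the points `pt z`, and the weight `f` is compatible with conjugation
in the sense of `hf`, then `wt f P` is real-valued as well. So the vanishing of its real part
suffices to make all its coefficients vanish. -/
lemma eq_zero_of_wt_re {Q : ℂ × ℂ → ℝ} {P : MvPolynomial (Fin 4) ℂ}
    (hP : ∀ z, (Q z : ℂ) = eval (pt z) P) (f : (Fin 4 →₀ ℕ) → ℂ)
    (hf : ∀ m, conj (f (m.mapDomain (![1, 0, 3, 2] : Fin 4 → Fin 4))) = f m)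
    (h : ∀ z, (eval (pt z) (wt f P)).re = 0) : ∀ m ∈ P.support, f m = 0 := by
  have hself : conjPoly P = P := by
    refine sub_eq_zero.1 (poly_eq_zero _ fun z => ?_)
    rw [map_sub, eval_conjPoly, ← hP, conj_ofReal, sub_self]
  have hW : conjPoly (wt f P) = wt f P := by
    ext m
    rw [coeff_conjPoly, coeff_wt, map_mul, hf, ← coeff_conjPoly, hself, coeff_wt]
  refine eq_zero_of_wt f P fun z => ?_
  have h1 := eval_conjPoly (wt f P) z
  rw [hW] at h1
  exact Complex.ext (h z) (conj_eq_iff_im.1 h1.symm)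

/-! ### The Levi form along the circle action -/

lemma mixedDeriv_eq {Q : ℂ × ℂ → ℝ} {P : MvPolynomial (Fin 4) ℂ}
    (hP : ∀ z, (Q z : ℂ) = eval (pt z) P) (z : ℂ × ℂ) :
    mixedDeriv Q (1, 0) (1, 0) z = eval (pt z) (pderiv 0 (pderiv 1 P)) ∧
    mixedDeriv Q (1, 0) (0, 1) z = eval (pt z) (pderiv 0 (pderiv 3 P)) ∧
    mixedDeriv Q (0, 1) (1, 0) z = eval (pt z) (pderiv 2 (pderiv 1 P)) ∧
    mixedDeriv Q (0, 1) (0, 1) z = eval (pt z) (pderiv 2 (pderiv 3 P)) := by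
  have hQ : (fun w => (Q w : ℂ)) = fun w => eval (pt w) P := funext hP
  have hw := wirtinger_eval
  simp only [mixedDeriv, hQ, (hw _).1, (hw _).2.1, (hw _).2.2.1, (hw _).2.2.2, and_self]

/-- The weight by which the Levi form in the direction `(q z₁, -p z₂)` acts on monomials. -/
def leviWt (p q : ℕ) (m : Fin 4 →₀ ℕ) : ℂ :=
  ((q : ℂ) * m 0 - p * m 2) * (q * m 1 - p * m 3)

lemma leviForm_direction {Q : ℂ × ℂ → ℝ} {P : MvPolynomial (Fin 4) ℂ}
    (hP : ∀ z, (Q z : ℂ) = eval (pt z) P) (p q : ℕ) (z : ℂ × ℂ) :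
    leviForm Q z (q * z.1, -(p * z.2)) = eval (pt z) (wt (leviWt p q) P) := by
  obtain ⟨h1, h2, h3, h4⟩ := mixedDeriv_eq hP z
  have hsplit : wt (leviWt p q) P =
      C ((q : ℂ) ^ 2) * (X 0 * X 1 * pderiv 0 (pderiv 1 P))
      - C ((p : ℂ) * q) * (X 0 * X 3 * pderiv 0 (pderiv 3 P))
      - C ((p : ℂ) * q) * (X 2 * X 1 * pderiv 2 (pderiv 1 P))
      + C ((p : ℂ) ^ 2) * (X 2 * X 3 * pderiv 2 (pderiv 3 P)) := by
    rw [X_X_pderiv (by decide), X_X_pderiv (by decide), X_X_pderiv (by decide),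
      X_X_pderiv (by decide)]
    ext m
    simp only [coeff_add, coeff_sub, coeff_C_mul, coeff_wt, leviWt]
    ring
  rw [hsplit, leviForm, h1, h2, h3, h4]
  simp [pt]
  ring

/-- The heart of the argument. The Levi form of `Q` in the direction `(q z₁, -p z₂)` is
nonnegative, while its average over a finite subgroup of the circle action
`(z₁, z₂) ↦ (e^{iqs} z₁, e^{-ips} z₂)` vanishes; hence only monomials invariant under this action
occur. -/
lemma support_line {p q : ℕ} {Q : ℂ × ℂ → ℝ} {P : MvPolynomial (Fin 4) ℂ}
    (hP : ∀ z, (Q z : ℂ) = eval (pt z) P) (hpsh : IsPsh Q)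
    (hdeg : ∀ m ∈ P.support, m 0 + m 1 = 2 * p ∧ m 2 + m 3 = 2 * q) :
    ∀ m ∈ P.support, q * m 0 = p * m 2 := by
  -- all frequencies `q m₀ + p m₃` are at most `4pq`, so `N`-th roots of unity separate them
  set N := 4 * p * q + 1 with hN
  have hN0 : N ≠ 0 := by omega
  obtain ⟨ω, hω⟩ : ∃ ω : ℂ, IsPrimitiveRoot ω N := ⟨_, Complex.isPrimitiveRoot_exp N hN0⟩
  have hω1 : ω * conj ω = 1 := by
    rw [mul_conj, normSq_eq_norm_sq, hω.norm'_eq_one hN0]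
    simp
  have hmean : ∀ z : ℂ × ℂ, ∑ k ∈ Finset.range N,
      eval (pt ((ω ^ (q * k)) * z.1, (conj ω ^ (p * k)) * z.2)) (wt (leviWt p q) P) = 0 := by
    intro z
    simp only [eval_scale]
    simp only [eval_wt]
    rw [Finset.sum_comm]
    refine Finset.sum_eq_zero fun m hm => ?_
    obtain ⟨hd1, hd2⟩ := hdeg m hm
    set A := q * m 0 + p * m 3 with hA
    set B := q * m 1 + p * m 2 with hB
    have hAB : A + B = 4 * p * q := by
      calc A + B = q * (m 0 + m 1) + p * (m 2 + m 3) := by rw [hA, hB]; ring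
        _ = 4 * p * q := by rw [hd1, hd2]; ring
    set η := ω ^ A * conj ω ^ B with hη
    have hterm : ∀ k ∈ Finset.range N,
        leviWt p q m * ((ω ^ (q * k)) ^ m 0 * conj (ω ^ (q * k)) ^ m 1 *
          (conj ω ^ (p * k)) ^ m 2 * conj (conj ω ^ (p * k)) ^ m 3) * coeff m P *
            ∏ i, pt z i ^ m i =
        η ^ k * (leviWt p q m * coeff m P * ∏ i, pt z i ^ m i) := by
      intro k _
      have : (ω ^ (q * k)) ^ m 0 * conj (ω ^ (q * k)) ^ m 1 *
          (conj ω ^ (p * k)) ^ m 2 * conj (conj ω ^ (p * k)) ^ m 3 = η ^ k := by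
        simp only [hη, hA, hB, map_pow, conj_conj, mul_pow, ← pow_mul, pow_add]
        ring
      rw [this]
      ring
    rw [Finset.sum_congr rfl hterm, ← Finset.sum_mul]
    by_cases hη1 : η = 1
    · have hpow : ω ^ A = ω ^ B := by
        calc ω ^ A = ω ^ A * (ω * conj ω) ^ B := by rw [hω1, one_pow, mul_one]
          _ = η * ω ^ B := by rw [hη, mul_pow]; ring
          _ = ω ^ B := by rw [hη1, one_mul]
      have hEq : A = B := hω.pow_inj (by omega) (by omega) hpow
      have h0 : leviWt p q m = 0 := by
        have c1 : (q : ℂ) * m 0 + p * m 3 = q * m 1 + p * m 2 := by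
          exact_mod_cast hEq
        have c2 : (m 0 : ℂ) + m 1 = 2 * p := by exact_mod_cast hd1
        have c3 : (m 2 : ℂ) + m 3 = 2 * q := by exact_mod_cast hd2
        have : (q : ℂ) * m 0 - p * m 2 = 0 := by
          linear_combination c1 / 2 + q / 2 * c2 - p / 2 * c3
        rw [leviWt, this, zero_mul]
      rw [h0]
      simp
    · have hηN : η ^ N = 1 := by
        rw [hη, mul_pow, ← pow_mul, ← pow_mul, mul_comm A, mul_comm B, pow_mul, pow_mul,
          ← map_pow, hω.pow_eq_one]
        simp
      have : ∑ k ∈ Finset.range N, η ^ k = 0 := by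
        rw [geom_sum_eq hη1, hηN, sub_self, zero_div]
      rw [this, zero_mul]
  have hre : ∀ z, (eval (pt z) (wt (leviWt p q) P)).re = 0 := by
    intro z
    have h0 := congrArg Complex.re (hmean z)
    rw [Complex.re_sum, Complex.zero_re, Finset.sum_eq_zero_iff_of_nonneg] at h0
    · simpa using h0 0 (by simp [hN])
    · intro k _
      rw [← leviForm_direction hP]
      exact hpsh _ _
  have hvan := eq_zero_of_wt_re hP (leviWt p q) (by
    intro m
    have hinj : Function.Injective (![1, 0, 3, 2] : Fin 4 → Fin 4) := by decide
    have e0 : m.mapDomain (![1, 0, 3, 2] : Fin 4 → Fin 4) 0 = m 1 :=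
      Finsupp.mapDomain_apply hinj m 1
    have e1 : m.mapDomain (![1, 0, 3, 2] : Fin 4 → Fin 4) 1 = m 0 :=
      Finsupp.mapDomain_apply hinj m 0
    have e2 : m.mapDomain (![1, 0, 3, 2] : Fin 4 → Fin 4) 2 = m 3 :=
      Finsupp.mapDomain_apply hinj m 3
    have e3 : m.mapDomain (![1, 0, 3, 2] : Fin 4 → Fin 4) 3 = m 2 :=
      Finsupp.mapDomain_apply hinj m 2
    simp only [leviWt, e0, e1, e2, e3, map_mul, map_sub, Complex.conj_natCast]
    ring) hre
  intro m hm
  obtain ⟨hd1, hd2⟩ := hdeg m hm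
  have c2 : (m 0 : ℂ) + m 1 = 2 * p := by exact_mod_cast hd1
  have c3 : (m 2 : ℂ) + m 3 = 2 * q := by exact_mod_cast hd2
  have hsq : ((q : ℂ) * m 0 - p * m 2) ^ 2 = 0 := by
    have := hvan m hm
    rw [leviWt] at this
    linear_combination -this + ((q : ℂ) * m 0 - p * m 2) * (q * c2 - p * c3)
  have := sub_eq_zero.1 (pow_eq_zero_iff two_ne_zero |>.1 hsq)
  exact_mod_cast this

/-! ### The one-variable polynomial -/

/-- The polynomial in `w, w̄` obtained from `P` by formally dividing the exponents of `z₁, z̄₁`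
by `d` and dropping `z₂, z̄₂`. -/
def quotPoly (d : ℕ) (P : MvPolynomial (Fin 4) ℂ) : MvPolynomial (Fin 2) ℂ :=
  ∑ m ∈ P.support,
    monomial (Finsupp.single 0 (m 0 / d) + Finsupp.single 1 (m 1 / d)) (coeff m P)

lemma eval_quotPoly (d : ℕ) (P : MvPolynomial (Fin 4) ℂ) (w : ℂ) :
    eval ![w, conj w] (quotPoly d P) =
      ∑ m ∈ P.support, coeff m P * (w ^ (m 0 / d) * conj w ^ (m 1 / d)) := by
  simp only [quotPoly, map_sum, eval_monomial, Finsupp.prod_fintype, pow_zero, implies_true,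
    Fin.prod_univ_two]
  simp

/-- `|w|² ∂∂̄` acts diagonally on the monomials of `quotPoly d P`. -/
lemma eval_pderiv_quotPoly (d : ℕ) (P : MvPolynomial (Fin 4) ℂ) (w : ℂ) :
    w * conj w * eval ![w, conj w] (pderiv 0 (pderiv 1 (quotPoly d P))) =
      ∑ m ∈ P.support, ((m 0 / d : ℕ) : ℂ) * ((m 1 / d : ℕ) : ℂ) * coeff m P *
        (w ^ (m 0 / d) * conj w ^ (m 1 / d)) := by
  have h : X 0 * X 1 * pderiv 0 (pderiv 1 (quotPoly d P)) =
      ∑ m ∈ P.support, monomial (Finsupp.single 0 (m 0 / d) + Finsupp.single 1 (m 1 / d))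
        (((m 0 / d : ℕ) : ℂ) * ((m 1 / d : ℕ) : ℂ) * coeff m P) := by
    simp only [quotPoly, map_sum, Finset.mul_sum]
    refine Finset.sum_congr rfl fun m _ => ?_
    rw [X_X_pderiv_monomial (by decide)]
    simp
  have h' := congrArg (eval ![w, conj w]) h
  simp only [map_sum, eval_monomial, Finsupp.prod_fintype, pow_zero, implies_true,
    Fin.prod_univ_two, map_mul, eval_X] at h'
  simpa using h'

end Weights

/-- Theorem 2.4: a plurisubharmonic, non-harmonic polynomial on
`ℂ²` that is bihomogeneous of bidegree `(2p, 2q)` has the form `U(z₁^d z₂^D)`. -/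
theorem bihomogeneous_structure (p q : ℕ) (hp : 0 < p) (hq : 0 < q) (Q : ℂ × ℂ → ℝ)
    (hpoly : IsRealPoly2 Q) (hpsh : IsPsh Q) (hnh : ¬ ∀ z, lap2 Q z = 0)
    (hhom1 : ∀ t : ℝ, 0 < t → ∀ z : ℂ × ℂ, Q ((t : ℂ) * z.1, z.2) = t ^ (2 * p) * Q z)
    (hhom2 : ∀ t : ℝ, 0 < t → ∀ z : ℂ × ℂ, Q (z.1, (t : ℂ) * z.2) = t ^ (2 * q) * Q z) :
    ∃ (d D : ℕ) (U : ℂ → ℝ) (j : ℕ), 0 < d ∧ 0 < D ∧ IsRealPoly1 U ∧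
      (∀ t : ℝ, 0 < t → ∀ w : ℂ, U ((t : ℂ) * w) = t ^ j * U w) ∧
      Subharmonic U ∧ ¬ IsHarmonic U ∧
      ∀ z : ℂ × ℂ, Q z = U (z.1 ^ d * z.2 ^ D) := by
  obtain ⟨P, hP⟩ := hpoly
  have hdeg := support_bidegree hP hhom1 hhom2
  have hline := support_line hP hpsh hdeg
  obtain ⟨g, d, D, hg, hcop, hpd, hqD⟩ := Nat.exists_coprime' (Nat.gcd_pos_of_pos_left q hp)
  have hd : 0 < d := Nat.pos_of_mul_pos_right (hpd ▸ hp)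
  have hD : 0 < D := Nat.pos_of_mul_pos_right (hqD ▸ hq)
  have hexp : ∀ m ∈ P.support, ∃ k l, k + l = 2 * g ∧ m 0 = d * k ∧ m 1 = d * l ∧
      m 2 = D * k ∧ m 3 = D * l := by
    intro m hm
    obtain ⟨hd1, hd2⟩ := hdeg m hm
    have h1 : D * m 0 = d * m 2 := by
      have := hline m hm
      rw [hpd, hqD] at this
      refine Nat.eq_of_mul_eq_mul_left hg ?_
      linarith
    obtain ⟨k, hk⟩ : d ∣ m 0 := hcop.dvd_of_dvd_mul_left ⟨_, h1⟩
    have h2 : m 2 = D * k := by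
      refine Nat.eq_of_mul_eq_mul_left hd ?_
      rw [← h1, hk]
      ring
    obtain ⟨l, hl⟩ : d ∣ m 1 :=
      (Nat.dvd_add_right ⟨k, hk⟩).1 ⟨2 * g, by rw [hd1, hpd]; ring⟩
    have hkl : k + l = 2 * g := by
      refine Nat.eq_of_mul_eq_mul_left hd ?_
      rw [mul_add, ← hk, ← hl, hd1, hpd]
      ring
    refine ⟨k, l, hkl, hk, hl, h2, ?_⟩
    have : D * k + m 3 = D * k + D * l := by
      rw [← h2, hd2, h2, ← mul_add, hkl, hqD]
      ring
    omega
  set R := quotPoly d P with hR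
  -- each monomial that occurs factors through `z₁^d z₂^D`
  have hmon : ∀ m ∈ P.support, ∀ z : ℂ × ℂ, ∏ i, pt z i ^ m i =
      (z.1 ^ d * z.2 ^ D) ^ (m 0 / d) * conj (z.1 ^ d * z.2 ^ D) ^ (m 1 / d) := by
    intro m hm z
    obtain ⟨k, l, -, h0, h1, h2, h3⟩ := hexp m hm
    rw [Fin.prod_univ_four, h0, h1, h2, h3, Nat.mul_div_cancel_left _ hd,
      Nat.mul_div_cancel_left _ hd]
    simp only [pt, map_mul, map_pow, mul_pow, ← pow_mul]
    simp
    ring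
  have hQR : ∀ z : ℂ × ℂ, (Q z : ℂ) =
      MvPolynomial.eval ![z.1 ^ d * z.2 ^ D, conj (z.1 ^ d * z.2 ^ D)] R := by
    intro z
    rw [hP z, hR, eval_quotPoly, MvPolynomial.eval_eq']
    exact Finset.sum_congr rfl fun m hm => by rw [← hmon m hm z]
  have hroot : ∀ w : ℂ, ∃ z : ℂ × ℂ, z.1 ^ d * z.2 ^ D = w := by
    intro w
    obtain ⟨x, hx⟩ := IsAlgClosed.exists_pow_nat_eq w hd
    exact ⟨(x, 1), by simp [hx]⟩
  set U : ℂ → ℝ := fun w => (MvPolynomial.eval ![w, conj w] R).re with hUdef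
  have hU : ∀ w, (U w : ℂ) = MvPolynomial.eval ![w, conj w] R := by
    intro w
    obtain ⟨z, rfl⟩ := hroot w
    simp only [hUdef]
    rw [← hQR, ofReal_re]
  have hlap : ∀ w, lap U w = 4 * MvPolynomial.eval ![w, conj w]
      (MvPolynomial.pderiv 0 (MvPolynomial.pderiv 1 R)) := by
    intro w
    have : (fun w => (U w : ℂ)) = fun w => MvPolynomial.eval ![w, conj w] R := funext hU
    rw [lap, this, (wirtinger1_eval R).2, (wirtinger1_eval _).1]
  -- the chain rule for `Q = U ∘ (z₁^d z₂^D)`, in the logarithmic derivatives `z_j ∂/∂z_j`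
  have hlog1 : ∀ z : ℂ × ℂ, z.1 * conj z.1 * mixedDeriv Q (1, 0) (1, 0) z =
      d ^ 2 * (z.1 ^ d * z.2 ^ D * conj (z.1 ^ d * z.2 ^ D) *
        (lap U (z.1 ^ d * z.2 ^ D) / 4)) := by
    intro z
    have e := congrArg (MvPolynomial.eval (pt z)) (X_X_pderiv (i := 0) (j := 1) (by decide) P)
    rw [map_mul, map_mul, ← (mixedDeriv_eq hP z).1, eval_wt] at e
    simp only [MvPolynomial.eval_X] at e
    rw [hlap, mul_div_cancel_left₀ _ (by norm_num : (4 : ℂ) ≠ 0), hR, eval_pderiv_quotPoly,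
      Finset.mul_sum]
    refine Eq.trans (by simp [pt]) (e.trans (Finset.sum_congr rfl fun m hm => ?_))
    rw [hmon m hm z]
    obtain ⟨k, l, -, h0, h1, -, -⟩ := hexp m hm
    rw [h0, h1, Nat.mul_div_cancel_left _ hd, Nat.mul_div_cancel_left _ hd]
    push_cast
    ring
  have hlog2 : ∀ z : ℂ × ℂ, z.2 * conj z.2 * mixedDeriv Q (0, 1) (0, 1) z =
      D ^ 2 * (z.1 ^ d * z.2 ^ D * conj (z.1 ^ d * z.2 ^ D) *
        (lap U (z.1 ^ d * z.2 ^ D) / 4)) := by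
    intro z
    have e := congrArg (MvPolynomial.eval (pt z)) (X_X_pderiv (i := 2) (j := 3) (by decide) P)
    rw [map_mul, map_mul, ← (mixedDeriv_eq hP z).2.2.2, eval_wt] at e
    simp only [MvPolynomial.eval_X] at e
    rw [hlap, mul_div_cancel_left₀ _ (by norm_num : (4 : ℂ) ≠ 0), hR, eval_pderiv_quotPoly,
      Finset.mul_sum]
    refine Eq.trans (by simp [pt]) (e.trans (Finset.sum_congr rfl fun m hm => ?_))
    rw [hmon m hm z]
    obtain ⟨k, l, -, h0, h1, h2, h3⟩ := hexp m hm
    rw [h0, h1, h2, h3, Nat.mul_div_cancel_left _ hd, Nat.mul_div_cancel_left _ hd]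
    push_cast
    ring
  refine ⟨d, D, U, 2 * g, hd, hD, ⟨R, hU⟩, ?_, ?_, ?_, ?_⟩
  · intro t _ w
    have : ((U (t * w) : ℝ) : ℂ) = ((t ^ (2 * g) * U w : ℝ) : ℂ) := by
      rw [ofReal_mul, ofReal_pow, hU, hU, hR, eval_quotPoly, eval_quotPoly, Finset.mul_sum]
      refine Finset.sum_congr rfl fun m hm => ?_
      obtain ⟨k, l, hkl, h0, h1, -, -⟩ := hexp m hm
      rw [h0, h1, Nat.mul_div_cancel_left _ hd, Nat.mul_div_cancel_left _ hd, ← hkl, map_mul,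
        conj_ofReal]
      ring
    exact_mod_cast this
  · have hcont : Continuous fun w => (lap U w).re := by
      have h1 : Continuous fun w : ℂ => MvPolynomial.eval ![w, conj w]
          (MvPolynomial.pderiv 0 (MvPolynomial.pderiv 1 R)) := by
        refine (MvPolynomial.continuous_eval _).comp (continuous_pi fun i => ?_)
        fin_cases i
        · exact continuous_id
        · exact continuous_conj
      simp only [hlap]
      exact continuous_re.comp (continuous_const.mul h1)
    have hne : ∀ w ∈ ({0}ᶜ : Set ℂ), 0 ≤ (lap U w).re := by
      intro w hw
      obtain ⟨z, rfl⟩ := hroot w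
      set w := z.1 ^ d * z.2 ^ D with hwdef
      have hlevi : 0 ≤ (mixedDeriv Q (1, 0) (1, 0) z).re := by
        simpa [leviForm] using hpsh z (1, 0)
      have e := congrArg Complex.re (hlog1 z)
      rw [← hwdef, mul_conj, mul_conj, re_ofReal_mul] at e
      have e' : (d : ℂ) ^ 2 * ((normSq w : ℂ) * (lap U w / 4)) =
          ((d ^ 2 * normSq w / 4 : ℝ) : ℂ) * lap U w := by
        push_cast
        ring
      rw [e', re_ofReal_mul] at e
      have hpos : 0 < (d : ℝ) ^ 2 * normSq w / 4 := by
        have := normSq_pos.2 hw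
        positivity
      exact (mul_nonneg_iff_of_pos_left hpos).1 (e ▸ mul_nonneg (normSq_nonneg _) hlevi)
    have hclosed : IsClosed {w : ℂ | 0 ≤ (lap U w).re} := isClosed_le continuous_const hcont
    have hdense : Dense ({0}ᶜ : Set ℂ) := dense_compl_singleton 0
    intro w
    exact hclosed.closure_subset_iff.2 hne (hdense w)
  · intro hharm
    apply hnh
    have hmul : (MvPolynomial.X 0 * MvPolynomial.X 1 * (MvPolynomial.X 2 * MvPolynomial.X 3)) *
        (MvPolynomial.pderiv 0 (MvPolynomial.pderiv 1 P) +
          MvPolynomial.pderiv 2 (MvPolynomial.pderiv 3 P)) = 0 := by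
      refine poly_eq_zero _ fun z => ?_
      have e1 := hlog1 z
      have e2 := hlog2 z
      rw [hharm, (mixedDeriv_eq hP z).1] at e1
      rw [hharm, (mixedDeriv_eq hP z).2.2.2] at e2
      simp only [map_mul, map_add, MvPolynomial.eval_X, pt, Matrix.cons_val] at e1 e2 ⊢
      linear_combination z.2 * conj z.2 * e1 + z.1 * conj z.1 * e2
    have hzero := (mul_eq_zero.1 hmul).resolve_left (by simp [MvPolynomial.X_ne_zero])
    intro z
    rw [lap2, (mixedDeriv_eq hP z).1, (mixedDeriv_eq hP z).2.2.2, ← map_add, hzero]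
    simp
  · intro z
    have := (hQR z).trans (hU _).symm
    exact_mod_cast this

end
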